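/- arXiv:2107.01794 — 9 statements merged into one kernel-verified Lean document; each statement's English description precedes it below -/
import Mathlib

section
/- Suppose γ > 0 and β < 0. Then for every integer n, every Floquet exponent ξ ∈ (0, 1/2], and every k > 0, the collision ω(n+ξ) = ω(n+1+ξ) does NOT hold, where c₀ = γ/k² + βk² and ω(x) = k²·x·(c₀ − βk²x²) − γ/x. -/
/-- Dispersion function of the linearized Ostrovsky equation,
with `c₀ = γ/k² + βk²` built in. -/
noncomputable def omega (γ β k x : ℝ) : ℝ :=
  k^2 * x * ((γ/k^2 + β*k^2) - β*k^2*x^2) - γ/x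

/-- The increment of `omega` over a unit step, cleared of denominators, in terms of the
product `x * (x + 1)`. -/
lemma mul_omega_add_one_sub_omega (γ β : ℝ) {k x : ℝ} (hk : k ≠ 0) (hx : x ≠ 0)
    (hx1 : x + 1 ≠ 0) :
    x * (x + 1) * (omega γ β k (x + 1) - omega γ β k x) =
      γ * (1 + x * (x + 1)) - 3 * β * k ^ 4 * (x * (x + 1)) ^ 2 := by
  unfold omega
  field_simp
  ring

lemma omega_ne_omega_add_one {γ β k x : ℝ} (hγ : 0 < γ) (hβ : β < 0) (hk : k ≠ 0)
    (hx : x ≠ 0) (hx1 : x + 1 ≠ 0) : omega γ β k x ≠ omega γ β k (x + 1) := by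
  intro h
  have key := mul_omega_add_one_sub_omega γ β hk hx hx1
  rw [h, sub_self, mul_zero] at key
  have h1 : 0 < γ * (1 + x * (x + 1)) := mul_pos hγ (by nlinarith [sq_nonneg (2 * x + 1)])
  have h2 : 0 ≤ -β * (k ^ 4 * (x * (x + 1)) ^ 2) :=
    mul_nonneg (neg_nonneg.2 hβ.le) (by positivity)
  linarith

lemma intCast_add_ne_zero {ξ : ℝ} (h0 : 0 < ξ) (h1 : ξ < 1) (n : ℤ) : (n : ℝ) + ξ ≠ 0 := by
  intro h
  have hneg : n < 0 := by exact_mod_cast (by linarith : (n : ℝ) < 0)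
  have hgt : -1 < n := by exact_mod_cast (by linarith : (-1 : ℝ) < n)
  omega

theorem no_adjacent_collision_neg_beta (γ β : ℝ) (hγ : 0 < γ) (hβ : β < 0) :
    ∀ (n : ℤ) (ξ k : ℝ), 0 < ξ → ξ ≤ 1/2 → 0 < k →
      omega γ β k ((n : ℝ) + ξ) ≠ omega γ β k ((n : ℝ) + 1 + ξ) := by
  intro n ξ k h0 h1 hk
  have hξ : ξ < 1 := by linarith
  have hn1 := intCast_add_ne_zero h0 hξ (n + 1)
  push_cast at hn1
  rw [add_right_comm] at hn1 ⊢
  exact omega_ne_omega_add_one hγ hβ hk.ne' (intCast_add_ne_zero h0 hξ n) hn1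
end

section
/- Suppose γ > 0 and β > 0. Then for every integer n and every Floquet exponent ξ ∈ (0, 1/2], there exists k > 0 such that ω(n+ξ) = ω(n+1+ξ), where c₀ = γ/k² + βk² and ω(x) = k²·x·(c₀ − βk²x²) − γ/x. -/
/-- The wave numbers at which the modes `x` and `x + 1` collide satisfy an explicit
equation for `k ^ 4`. -/
theorem omega_eq_omega_add_one {γ β k x : ℝ} (hk : k ≠ 0) (hx : x ≠ 0) (hx' : x + 1 ≠ 0)
    (h : 3 * β * (x * (x + 1)) ^ 2 * k ^ 4 = γ * (x * (x + 1) + 1)) :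
    omega γ β k x = omega γ β k (x + 1) := by
  unfold omega
  field_simp
  linear_combination h

theorem adjacent_collision_pos_beta (γ β : ℝ) (hγ : 0 < γ) (hβ : 0 < β) :
    ∀ (n : ℤ) (ξ : ℝ), 0 < ξ → ξ ≤ 1/2 →
      ∃ k : ℝ, 0 < k ∧
        omega γ β k ((n : ℝ) + ξ) = omega γ β k ((n : ℝ) + 1 + ξ) := by
  intro n ξ h0 h1
  have hx : (n : ℝ) + ξ ≠ 0 := by
    intro h
    have hlo : (-1 : ℝ) < n := by linarith
    have hhi : (n : ℝ) < 0 := by linarith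
    norm_cast at hlo hhi
    lia
  have hx' : (n : ℝ) + ξ + 1 ≠ 0 := by
    intro h
    have hlo : (-2 : ℝ) < n := by linarith
    have hhi : (n : ℝ) < -1 := by linarith
    norm_cast at hlo hhi
    lia
  rw [add_right_comm]
  generalize (n : ℝ) + ξ = x at hx hx' ⊢
  have hden : 0 < 3 * β * (x * (x + 1)) ^ 2 := by positivity
  have hnum : 0 < γ * (x * (x + 1) + 1) := mul_pos hγ (by nlinarith [sq_nonneg (2 * x + 1)])
  have hpos : 0 < γ * (x * (x + 1) + 1) / (3 * β * (x * (x + 1)) ^ 2) := div_pos hnum hden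
  have hk := Real.sqrt_pos.2 (Real.sqrt_pos.2 hpos)
  refine ⟨_, hk, omega_eq_omega_add_one hk.ne' hx hx' ?_⟩
  rw [show 4 = 2 * 2 from rfl, pow_mul, Real.sq_sqrt (Real.sqrt_nonneg _), Real.sq_sqrt hpos.le,
    mul_div_cancel₀ _ hden.ne']
end

section
/- Suppose γ > 0 and β > 0. Then for all integers n, m with 0 ≤ n < m and every Floquet exponent ξ ∈ (0, 1/2], there exists k > 0 such that ω(n+ξ) = ω(m+ξ), where c₀ = γ/k² + βk² and ω(x) = k²·x·(c₀ − βk²x²) − γ/x. -/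
/-- The difference of the dispersion function at two nonzero points, factored. -/
theorem omega_sub_omega {γ β k a b : ℝ} (hk : k ≠ 0) (ha : a ≠ 0) (hb : b ≠ 0) :
    omega γ β k a - omega γ β k b =
      (b - a) * (k^4 * (β * (a^2 + a*b + b^2 - 1)) - γ * (1 + 1/(a*b))) := by
  unfold omega
  field_simp
  ring

/-- For positive `γ` and `β`, two positive points with `a² + ab + b² > 1` collide
for some wave number. -/
theorem exists_omega_eq_omega {γ β a b : ℝ} (hγ : 0 < γ) (hβ : 0 < β) (ha : 0 < a) (hb : 0 < b)
    (hab : 1 < a^2 + a*b + b^2) : ∃ k : ℝ, 0 < k ∧ omega γ β k a = omega γ β k b := by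
  have hD : 0 < β * (a^2 + a*b + b^2 - 1) := mul_pos hβ (sub_pos.mpr hab)
  have hN : 0 < γ * (1 + 1/(a*b)) := by positivity
  obtain ⟨k, hk, hk4⟩ : ∃ k : ℝ, 0 < k ∧
      k^4 = γ * (1 + 1/(a*b)) / (β * (a^2 + a*b + b^2 - 1)) :=
    ⟨_, Real.rpow_pos_of_pos (div_pos hN hD) _,
      Real.rpow_inv_natCast_pow (div_pos hN hD).le four_ne_zero⟩
  refine ⟨k, hk, sub_eq_zero.mp ?_⟩
  rw [omega_sub_omega hk.ne' ha.ne' hb.ne', hk4, div_mul_cancel₀ _ hD.ne', sub_self, mul_zero]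

theorem nonneg_modes_collision_pos_beta (γ β : ℝ) (hγ : 0 < γ) (hβ : 0 < β) :
    ∀ (n m : ℤ), 0 ≤ n → n < m →
      ∀ ξ : ℝ, 0 < ξ → ξ ≤ 1/2 →
        ∃ k : ℝ, 0 < k ∧
          omega γ β k ((n : ℝ) + ξ) = omega γ β k ((m : ℝ) + ξ) := by
  intro n m hn hnm ξ hξ _
  have hn' : (0 : ℝ) ≤ n := by exact_mod_cast hn
  have hm : (1 : ℝ) ≤ m := by exact_mod_cast (by lia : (1 : ℤ) ≤ m)
  have ha : 0 < (n : ℝ) + ξ := by linarith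
  have hb : 1 < (m : ℝ) + ξ := by linarith
  refine exists_omega_eq_omega hγ hβ ha (by linarith) ?_
  nlinarith [mul_pos ha (zero_lt_one.trans hb)]
end

section
/- Suppose γ > 0 and β < 0. Then for all integers n, m with 0 ≤ n < m, every Floquet exponent ξ ∈ (0, 1/2], and every k > 0, the collision ω(n+ξ) = ω(m+ξ) does NOT hold, where c₀ = γ/k² + βk² and ω(x) = k²·x·(c₀ − βk²x²) − γ/x. -/
/-- The factor `k²` cancels against `c₀`, giving a sum of two terms odd in `x`. -/
theorem omega_eq (γ β x : ℝ) {k : ℝ} (hk : k ≠ 0) :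
    omega γ β k x = γ * (x - 1 / x) + (-β * k ^ 4) * (x ^ 3 - x) := by
  unfold omega
  have h : k ^ 2 * (γ / k ^ 2) = γ := by field_simp
  linear_combination x * h

theorem omega_lt_omega {γ β k x y : ℝ} (hγ : 0 < γ) (hβ : β < 0) (hk : 0 < k)
    (hx : 0 < x) (hxy : x < y) (hy : 1 ≤ y) : omega γ β k x < omega γ β k y := by
  rw [omega_eq γ β x hk.ne', omega_eq γ β y hk.ne']
  have hinv : 1 / y < 1 / x := one_div_lt_one_div_of_lt hx hxy
  have hcubic : x ^ 3 - x < y ^ 3 - y := by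
    have hq : 0 < x ^ 2 + x * y + (y ^ 2 - 1) := by
      nlinarith [sq_nonneg x, mul_pos hx (hx.trans hxy)]
    nlinarith [mul_pos (sub_pos.mpr hxy) hq]
  have hb : 0 < -β * k ^ 4 := mul_pos (neg_pos.mpr hβ) (pow_pos hk 4)
  exact add_lt_add (mul_lt_mul_of_pos_left (by linarith) hγ) (mul_lt_mul_of_pos_left hcubic hb)

theorem no_nonneg_modes_collision_neg_beta (γ β : ℝ) (hγ : 0 < γ) (hβ : β < 0) :
    ∀ (n m : ℤ), 0 ≤ n → n < m →
      ∀ ξ k : ℝ, 0 < ξ → ξ ≤ 1/2 → 0 < k →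
        omega γ β k ((n : ℝ) + ξ) ≠ omega γ β k ((m : ℝ) + ξ) := by
  intro n m hn hnm ξ k hξ _ hk
  have hn' : (0 : ℝ) ≤ n := by exact_mod_cast hn
  have hnm' : (n : ℝ) + 1 ≤ m := by exact_mod_cast hnm
  exact (omega_lt_omega hγ hβ hk (by linarith) (by linarith) (by linarith)).ne
end

section
/- Suppose γ > 0 and β > 0. Then for every Floquet exponent ξ ∈ (0, 1/2] and every k > 0, the collision ω(−1+ξ) = ω(1+ξ) does NOT hold, where c₀ = γ/k² + βk² and ω(x) = k²·x·(c₀ − βk²x²) − γ/x. -/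
/-- The gap `ω(1+ξ) - ω(-1+ξ)` in closed form. -/
theorem omega_one_add_sub_omega_neg_one_add (γ β : ℝ) {k ξ : ℝ} (hk : k ≠ 0)
    (h₁ : 1 + ξ ≠ 0) (h₂ : -1 + ξ ≠ 0) :
    omega γ β k (1 + ξ) - omega γ β k (-1 + ξ) =
      -(2 * ξ^2 * (γ / ((1 + ξ) * (1 - ξ)) + 3 * β * k^4)) := by
  have h₃ : 1 - ξ ≠ 0 := fun h => h₂ (by linarith)
  unfold omega
  field_simp
  ring

theorem no_m11_collision_pos_beta (γ β : ℝ) (hγ : 0 < γ) (hβ : 0 < β) :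
    ∀ ξ k : ℝ, 0 < ξ → ξ ≤ 1/2 → 0 < k →
      omega γ β k (-1 + ξ) ≠ omega γ β k (1 + ξ) := by
  intro ξ k hξ hξ' hk heq
  have h₁ : 0 < 1 + ξ := by linarith
  have h₂ : 0 < 1 - ξ := by linarith
  have hgap := omega_one_add_sub_omega_neg_one_add γ β hk.ne' h₁.ne'
    (show -1 + ξ < 0 by linarith).ne
  have hpos : 0 < 2 * ξ^2 * (γ / ((1 + ξ) * (1 - ξ)) + 3 * β * k^4) := by positivity
  linarith
end

section
/- Let γ > 0, β ≠ 0, k > 0, c₀ = γ/k² + βk², ω(x) = k²·x·(c₀ − βk²x²) − γ/x, let n ≠ m be integers, and let ξ ∈ (0, 1/2]. Then ω(n+ξ) = 0 and ω(m+ξ) = 0 both hold if and only if β > 0, ξ = 1/2, m = −n − 1, and β·k⁴·(n + 1/2)² = γ. In particular, a collision of the two eigenvalues at the origin of the imaginary axis occurs only for positive dispersion β > 0, at Floquet exponent ξ = 1/2, for mode pairs {n, −n−1}, and at the wavenumber k = (γ/(β(n+1/2)²))^{1/4}. -/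
/-- Away from `x = 0` the dispersion function factors, with zeros at `x = ±1` and `βk⁴x² = γ`. -/
theorem omega_eq_zero_iff {γ β k x : ℝ} (hk : k ≠ 0) (hx : x ≠ 0) :
    omega γ β k x = 0 ↔ x ^ 2 = 1 ∨ β * k ^ 4 * x ^ 2 = γ := by
  have factored : omega γ β k x = (x ^ 2 - 1) * (γ - β * k ^ 4 * x ^ 2) / x := by
    unfold omega
    field_simp
    ring
  rw [factored, div_eq_zero_iff, or_iff_left hx, mul_eq_zero, sub_eq_zero, sub_eq_zero,
    eq_comm (a := γ)]

theorem int_add_ne_int {ξ : ℝ} (hξ0 : 0 < ξ) (hξ1 : ξ < 1) (n j : ℤ) : (n : ℝ) + ξ ≠ j := by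
  intro h
  have lower : n < j := by exact_mod_cast (by linarith : (n : ℝ) < j)
  have upper : j < n + 1 := by exact_mod_cast (by linarith : (j : ℝ) < n + 1)
  omega

theorem omega_int_add_eq_zero_iff {γ β k ξ : ℝ} (hk : k ≠ 0) (hξ0 : 0 < ξ) (hξ1 : ξ < 1)
    (n : ℤ) : omega γ β k (n + ξ) = 0 ↔ β * k ^ 4 * (n + ξ) ^ 2 = γ := by
  have ne_int := int_add_ne_int hξ0 hξ1 n
  rw [omega_eq_zero_iff hk (by simpa using ne_int 0), or_iff_right]
  rw [← one_pow 2, sq_eq_sq_iff_eq_or_eq_neg, not_or]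
  exact ⟨by simpa using ne_int 1, by simpa using ne_int (-1)⟩

theorem collision_at_origin (γ β k : ℝ) (hγ : 0 < γ) (hβ : β ≠ 0) (hk : 0 < k)
    (n m : ℤ) (hnm : n ≠ m) (ξ : ℝ) (hξ0 : 0 < ξ) (hξ1 : ξ ≤ 1/2) :
    (omega γ β k ((n : ℝ) + ξ) = 0 ∧ omega γ β k ((m : ℝ) + ξ) = 0) ↔
      (0 < β ∧ ξ = 1/2 ∧ m = -n - 1 ∧ β * k^4 * ((n : ℝ) + 1/2)^2 = γ) := by
  have hξ : ξ < 1 := by linarith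
  rw [omega_int_add_eq_zero_iff hk.ne' hξ0 hξ, omega_int_add_eq_zero_iff hk.ne' hξ0 hξ]
  constructor
  · rintro ⟨hn, hm⟩
    have sq_eq : ((n : ℝ) + ξ) ^ 2 = (m + ξ) ^ 2 :=
      mul_left_cancel₀ (mul_ne_zero hβ (pow_ne_zero 4 hk.ne')) (hn.trans hm.symm)
    have opposite : (n : ℝ) + ξ = -(m + ξ) := by
      refine (sq_eq_sq_iff_eq_or_eq_neg.mp sq_eq).resolve_left fun h => hnm ?_
      exact_mod_cast add_right_cancel h
    have lower : -1 ≤ n + m := by exact_mod_cast (by linarith : (-1 : ℝ) ≤ n + m)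
    have upper : n + m < 0 := by exact_mod_cast (by linarith : (n : ℝ) + m < 0)
    have hmn : m = -n - 1 := by omega
    have half : ξ = 1 / 2 := by
      rw [hmn] at opposite
      push_cast at opposite
      linarith
    refine ⟨?_, half, hmn, half ▸ hn⟩
    by_contra! hβ_nonpos
    have : β * (k ^ 4 * (n + ξ) ^ 2) ≤ 0 := mul_nonpos_of_nonpos_of_nonneg hβ_nonpos (by positivity)
    linarith
  · rintro ⟨-, rfl, rfl, h⟩
    refine ⟨h, ?_⟩
    push_cast
    linear_combination h
end

section
/- Suppose γ > 0 and β > 0, and let k > 0 satisfy k⁴ ≥ 4γ/β. Then there exists a Floquet exponent ξ ∈ (0, 1/2] such that ω(−1+ξ) = ω(ξ), where c₀ = γ/k² + βk² and ω(x) = k²·x·(c₀ − βk²x²) − γ/x; that is, for every wavenumber k ≥ (4γ/β)^{1/4} the modes −1 and 0 collide on the imaginary axis for some Floquet exponent. -/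
/-- The modes `-1` and `0` collide at `ξ` as soon as `p = ξ (1 - ξ)` solves
`3 β k⁴ p² + γ p - γ = 0`. -/
theorem omega_neg_one_add_eq {γ β k ξ : ℝ} (hk : k ≠ 0) (h0 : ξ ≠ 0) (h1 : -1 + ξ ≠ 0)
    (h : 3 * (β * k^4) * (ξ * (1 - ξ))^2 + γ * (ξ * (1 - ξ)) - γ = 0) :
    omega γ β k (-1 + ξ) = omega γ β k ξ := by
  unfold omega
  field_simp
  linear_combination h

theorem collision_above_threshold (γ β k : ℝ) (hγ : 0 < γ) (hβ : 0 < β)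
    (hk : 0 < k) (hk4 : 4*γ/β ≤ k^4) :
    ∃ ξ : ℝ, 0 < ξ ∧ ξ ≤ 1/2 ∧ omega γ β k (-1 + ξ) = omega γ β k ξ := by
  have hK : 4 * γ ≤ β * k^4 := by
    rwa [div_le_iff₀ hβ, mul_comm (k^4)] at hk4
  let q : ℝ → ℝ := fun ξ ↦ 3 * (β * k^4) * (ξ * (1 - ξ))^2 + γ * (ξ * (1 - ξ)) - γ
  have hq : ContinuousOn q (Set.Icc 0 (1/2)) := by fun_prop
  have hmem : (0 : ℝ) ∈ Set.Icc (q 0) (q (1/2)) := by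
    constructor <;> norm_num [q] <;> linarith
  obtain ⟨ξ, ⟨hξ0, hξ1⟩, hξ⟩ := intermediate_value_Icc (by norm_num) hq hmem
  have hne : ξ ≠ 0 := by
    rintro rfl
    norm_num [q] at hξ
    exact hγ.ne' hξ
  exact ⟨ξ, hξ0.lt_of_ne' hne, hξ1, omega_neg_one_add_eq hk.ne' hne (by linarith) hξ⟩
end

section
/- For every ξ ∈ (0, 1/2], one has ξ² − ξ + 1 ≥ 12·ξ²·(1−ξ)², with equality if and only if ξ = 1/2. Consequently, if γ > 0, β > 0, ξ ∈ (0, 1/2], k > 0, and ω(−1+ξ) = ω(ξ) (with c₀ = γ/k² + βk² and ω(x) = k²·x·(c₀ − βk²x²) − γ/x), then k⁴ ≥ 4γ/β. -/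
theorem quartic_gap_factorization (ξ : ℝ) :
    ξ^2 - ξ + 1 - 12*ξ^2*(1-ξ)^2 = (1 - 2*ξ)^2 * (1 + 3*(ξ*(1-ξ))) := by
  ring

theorem collision_identity {γ β ξ k : ℝ} (hξ : 0 < ξ) (hξ1 : ξ < 1) (hk : 0 < k)
    (h : omega γ β k (-1 + ξ) = omega γ β k ξ) :
    3*(β*k^4)*(ξ^2*(1-ξ)^2) = γ*(ξ^2 - ξ + 1) := by
  have h1 : 1 - ξ ≠ 0 := by linarith
  have h2 : γ/(-1 + ξ) = -(γ/(1-ξ)) := by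
    rw [← div_neg]
    ring_nf
  unfold omega at h
  rw [h2] at h
  field_simp at h
  linear_combination -h

theorem threshold_inequality :
    (∀ ξ : ℝ, 0 < ξ → ξ ≤ 1/2 →
      12*ξ^2*(1-ξ)^2 ≤ ξ^2 - ξ + 1 ∧
      (ξ^2 - ξ + 1 = 12*ξ^2*(1-ξ)^2 ↔ ξ = 1/2)) ∧
    (∀ γ β ξ k : ℝ, 0 < γ → 0 < β → 0 < ξ → ξ ≤ 1/2 → 0 < k →
      omega γ β k (-1 + ξ) = omega γ β k ξ → 4*γ/β ≤ k^4) := by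
  have gap_nonneg : ∀ ξ : ℝ, 0 < ξ → ξ ≤ 1/2 → 12*ξ^2*(1-ξ)^2 ≤ ξ^2 - ξ + 1 := by
    intro ξ h0 h1
    have h2 : 0 < 1 - ξ := by linarith
    rw [← sub_nonneg, quartic_gap_factorization]
    positivity
  refine ⟨fun ξ h0 h1 => ⟨gap_nonneg ξ h0 h1, fun h => ?_, ?_⟩, ?_⟩
  · have h2 : 0 < 1 - ξ := by linarith
    have h3 : 1 + 3*(ξ*(1-ξ)) ≠ 0 := by positivity
    rw [← sub_eq_zero, quartic_gap_factorization] at h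
    have h4 := pow_eq_zero_iff two_ne_zero |>.mp ((mul_eq_zero.mp h).resolve_right h3)
    linarith
  · rintro rfl
    norm_num
  · intro γ β ξ k hγ hβ h0 h1 hk h
    have h2 : 0 < 1 - ξ := by linarith
    have hid := collision_identity h0 (by linarith) hk h
    have hle := mul_le_mul_of_nonneg_left (gap_nonneg ξ h0 h1) hγ.le
    rw [div_le_iff₀ hβ]
    have ht : 0 < ξ^2*(1-ξ)^2 := by positivity
    refine le_of_mul_le_mul_right ?_ ht
    linarith
end

section
/- Let γ, β, k, a be real numbers with k > 0 and 3γ − 12βk⁴ ≠ 0. Set c₀ = γ/k² + βk², A₂ = 2k²/(3γ − 12βk⁴), c = c₀ + a²A₂, and define w : ℝ → ℝ by w(z) = a·cos z + a²A₂·cos 2z. Then for every real z, c·k²·w''(z) + β·k⁴·w''''(z) − k²·(w²)''(z) + γ·w(z) = 9a³A₂k²·cos 3z + 4a⁴A₂²k²·(2cos 4z − cos 2z). In particular the traveling-wave equation ck²w'' + βk⁴w'''' − k²(w²)'' + γw = 0 is satisfied up to terms of order a³. -/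
/-- The second derivative of a cosine polynomial of degree at most four. -/
theorem iteratedDeriv_two_cosine_poly (b₀ b₁ b₂ b₃ b₄ : ℝ) :
    iteratedDeriv 2 (fun z : ℝ => b₀ + b₁ * Real.cos z + b₂ * Real.cos (2*z)
        + b₃ * Real.cos (3*z) + b₄ * Real.cos (4*z))
      = fun z => -b₁ * Real.cos z + -(4*b₂) * Real.cos (2*z)
        + -(9*b₃) * Real.cos (3*z) + -(16*b₄) * Real.cos (4*z) := by
  have hcos (m z : ℝ) : HasDerivAt (fun z => Real.cos (m*z)) (-(m * Real.sin (m*z))) z := by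
    convert ((hasDerivAt_id' z).const_mul m).cos using 1
    ring
  have hsin (m z : ℝ) : HasDerivAt (fun z => Real.sin (m*z)) (m * Real.cos (m*z)) z := by
    convert ((hasDerivAt_id' z).const_mul m).sin using 1
    ring
  have hfst : deriv (fun z : ℝ => b₀ + b₁ * Real.cos z + b₂ * Real.cos (2*z)
        + b₃ * Real.cos (3*z) + b₄ * Real.cos (4*z))
      = fun z => -b₁ * Real.sin z + -(2*b₂) * Real.sin (2*z)
        + -(3*b₃) * Real.sin (3*z) + -(4*b₄) * Real.sin (4*z) := by
    funext z
    refine HasDerivAt.deriv ?_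
    convert (((((Real.hasDerivAt_cos z).const_mul b₁).const_add b₀).fun_add
      ((hcos 2 z).const_mul b₂)).fun_add ((hcos 3 z).const_mul b₃)).fun_add
      ((hcos 4 z).const_mul b₄) using 1
    ring
  rw [iteratedDeriv_succ, iteratedDeriv_one, hfst]
  funext z
  refine HasDerivAt.deriv ?_
  convert ((((Real.hasDerivAt_sin z).const_mul (-b₁)).fun_add
    ((hsin 2 z).const_mul (-(2*b₂)))).fun_add ((hsin 3 z).const_mul (-(3*b₃)))).fun_add
    ((hsin 4 z).const_mul (-(4*b₄))) using 1
  ring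

theorem iteratedDeriv_two_two_mode (p q : ℝ) :
    iteratedDeriv 2 (fun z : ℝ => p * Real.cos z + q * Real.cos (2*z))
      = fun z => -p * Real.cos z + -(4*q) * Real.cos (2*z) := by
  simpa using iteratedDeriv_two_cosine_poly 0 p q 0 0

theorem iteratedDeriv_four_two_mode (p q : ℝ) :
    iteratedDeriv 4 (fun z : ℝ => p * Real.cos z + q * Real.cos (2*z))
      = fun z => p * Real.cos z + 16*q * Real.cos (2*z) := by
  have hsplit (f : ℝ → ℝ) : iteratedDeriv 4 f = iteratedDeriv 2 (iteratedDeriv 2 f) := by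
    simp only [iteratedDeriv_eq_iterate]
    rfl
  rw [hsplit, iteratedDeriv_two_two_mode, iteratedDeriv_two_two_mode]
  funext z
  ring

theorem two_mode_sq (p q z : ℝ) :
    (p * Real.cos z + q * Real.cos (2*z))^2
      = (p^2 + q^2)/2 + p*q * Real.cos z + p^2/2 * Real.cos (2*z)
        + p*q * Real.cos (3*z) + q^2/2 * Real.cos (4*z) := by
  have hfour : Real.cos (4*z) = 2 * Real.cos (2*z)^2 - 1 := by
    rw [← Real.cos_two_mul]
    ring_nf
  rw [hfour, Real.cos_three_mul, Real.cos_two_mul]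
  ring

theorem second_order_residual (γ β k a A₂ c : ℝ) (hk : 0 < k)
    (hden : 3*γ - 12*β*k^4 ≠ 0)
    (hA₂ : A₂ = 2*k^2 / (3*γ - 12*β*k^4))
    (hc : c = (γ/k^2 + β*k^2) + a^2*A₂) :
    ∀ z : ℝ,
      c * k^2 * iteratedDeriv 2 (fun z => a * Real.cos z + a^2*A₂ * Real.cos (2*z)) z
        + β * k^4 * iteratedDeriv 4 (fun z => a * Real.cos z + a^2*A₂ * Real.cos (2*z)) z
        - k^2 * iteratedDeriv 2
            (fun z => (a * Real.cos z + a^2*A₂ * Real.cos (2*z))^2) z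
        + γ * (a * Real.cos z + a^2*A₂ * Real.cos (2*z))
      = 9*a^3*A₂*k^2 * Real.cos (3*z)
        + 4*a^4*A₂^2*k^2 * (2*Real.cos (4*z) - Real.cos (2*z)) := by
  intro z
  have hck : c * k^2 = γ + β*k^4 + a^2*A₂*k^2 := by
    rw [hc]
    field_simp
  have hA : A₂ * (3*γ - 12*β*k^4) = 2*k^2 := by
    rw [hA₂, div_mul_cancel₀ _ hden]
  simp only [two_mode_sq, iteratedDeriv_two_cosine_poly, iteratedDeriv_two_two_mode,
    iteratedDeriv_four_two_mode, hck]
  linear_combination -a^2 * Real.cos (2*z) * hA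
end
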